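/- Let l₋₁ ≤ u₋₁ and l₁ ≤ u₁ be real numbers with l₁ ≠ l₋₁, set L = l₁ − u₋₁ and U = u₁ − l₋₁, and suppose L < 0 < U. Let d be the maximin rule: d = 1 if l₁ > l₋₁ and d = −1 if l₁ < l₋₁. Then the worst-case regret sup over c ∈ [L,U] of (max(c,0) − c·I{d=1}) equals |L| when l₋₁ < l₁, and equals |U| when l₋₁ > l₁. -/

import Mathlib

/-!
Acting (`d = 1`) costs the negative part `c⁻`, and not acting costs the positive part `c⁺`. The
former is antitone and the latter monotone in `c`, so on `[L, U]` they are maximal at `L` and `U`.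
-/

/-- The regret of the treatment decision `d` at conditional average treatment effect `c`. Every
`d ≠ 1` counts as no treatment. -/
noncomputable def regret (d : ℤ) (c : ℝ) : ℝ :=
  max c 0 - c * (if d = 1 then (1 : ℝ) else 0)

lemma regret_one : regret 1 = fun c ↦ c⁻ := by
  funext c
  calc regret 1 c = c⁺ - c := by simp only [regret, if_true, mul_one, posPart_def]
    _ = c⁻ := by linarith only [posPart_sub_negPart c]

lemma regret_of_ne_one {d : ℤ} (hd : d ≠ 1) : regret d = fun c ↦ c⁺ := by
  funext c
  simp only [regret, if_neg hd, mul_zero, sub_zero, posPart_def]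

lemma isGreatest_image_regret_one {s : Set ℝ} {L : ℝ} (hL : IsLeast s L) :
    IsGreatest (regret 1 '' s) L⁻ := by
  rw [regret_one]
  exact negPart_anti.map_isLeast hL

lemma isGreatest_image_regret_of_ne_one {d : ℤ} (hd : d ≠ 1) {s : Set ℝ} {U : ℝ}
    (hU : IsGreatest s U) : IsGreatest (regret d '' s) U⁺ := by
  rw [regret_of_ne_one hd]
  exact posPart_mono.map_isGreatest hU

/-- Maximum regret of the maximin rule (Appendix B, pointwise form): with
counterfactual mean bounds `l₋₁ ≤ u₋₁`, `l₁ ≤ u₁`, `l₁ ≠ l₋₁`, CATE bounds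
`L = l₁ − u₋₁ < 0 < U = u₁ − l₋₁`, and the maximin decision `d = 1` if
`l₁ > l₋₁`, `d = −1` if `l₁ < l₋₁`, the worst-case regret
`sup_{c ∈ [L,U]} (max(c,0) − c·I{d=1})` equals `|L|` when `l₋₁ < l₁` and `|U|`
when `l₋₁ > l₁`. -/
theorem stmt_14 (lm1 um1 l1 u1 : ℝ) (d : ℤ)
    (h1 : lm1 ≤ um1) (h2 : l1 ≤ u1) (hne : l1 ≠ lm1)
    (hL : l1 - um1 < 0) (hU : 0 < u1 - lm1)
    (hd : d = if lm1 < l1 then 1 else -1) :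
    (lm1 < l1 →
      sSup ((fun c => max c 0 - c * (if d = 1 then (1:ℝ) else 0)) ''
          Set.Icc (l1 - um1) (u1 - lm1))
        = |l1 - um1|)
    ∧ (l1 < lm1 →
      sSup ((fun c => max c 0 - c * (if d = 1 then (1:ℝ) else 0)) ''
          Set.Icc (l1 - um1) (u1 - lm1))
        = |u1 - lm1|) := by
  have hLU : l1 - um1 ≤ u1 - lm1 := (hL.trans hU).le
  change (_ → sSup (regret d '' _) = _) ∧ (_ → sSup (regret d '' _) = _)
  constructor
  · intro h
    obtain rfl : d = 1 := by rw [hd, if_pos h]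
    rw [(isGreatest_image_regret_one (isLeast_Icc hLU)).csSup_eq,
      negPart_of_nonpos hL.le, abs_of_neg hL]
  · intro h
    have hd_ne : d ≠ 1 := by
      rw [hd, if_neg h.not_gt]
      decide
    rw [(isGreatest_image_regret_of_ne_one hd_ne (isGreatest_Icc hLU)).csSup_eq,
      posPart_of_nonneg hU.le, abs_of_pos hU]
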